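/- arXiv:2112.12340 — 2 statements merged into one kernel-verified Lean document; each statement's English description precedes it below -/
import Mathlib

section
/- Let Ω_S, Ω_I, X be nonempty finite types, S : Ω_S → X, f : X → Bool, C : Ω_S → Bool, I : X × Ω_I → Ω_S, and let δ, ε be nonnegative reals. Suppose (i) the joint distribution of (w, S w) with w uniform on Ω_S and the joint distribution of (I(S w, z), S w) with w uniform on Ω_S and z uniform on Ω_I independent are statistically indistinguishable within δ (as distributions on Ω_S × X); and (ii) Pr_{w ∼ uniform on Ω_S}[C w ≠ f (S w)] ≤ ε. Then Pr_{w ∼ uniform on Ω_S, z ∼ uniform on Ω_I independent}[C (I (S w, z)) ≠ f (S w)] ≤ ε + δ. -/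
open scoped ENNReal

/-- Probability of an event under a PMF. -/
noncomputable def prEvent {α : Type*} (μ : PMF α) (s : Set α) : ℝ :=
  (μ.toOuterMeasure s).toReal

/-- `μ` and `ν` are statistically indistinguishable within `δ`. -/
def StatIndist {α : Type*} (μ ν : PMF α) (δ : ℝ) : Prop :=
  ∀ T : Set α, |prEvent μ T - prEvent ν T| ≤ δ

theorem stmt_0 {ΩS ΩI X : Type*} [Fintype ΩS] [Nonempty ΩS] [Fintype ΩI] [Nonempty ΩI]
    [Fintype X] [Nonempty X]
    (S : ΩS → X) (f : X → Bool) (C : ΩS → Bool) (I : X × ΩI → ΩS)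
    (δ ε : ℝ) (hδ : 0 ≤ δ) (hε : 0 ≤ ε)
    (hind : StatIndist
      ((PMF.uniformOfFintype ΩS).map (fun w => (w, S w)))
      ((PMF.uniformOfFintype (ΩS × ΩI)).map (fun p => (I (S p.1, p.2), S p.1)))
      δ)
    (herr : prEvent (PMF.uniformOfFintype ΩS) {w | C w ≠ f (S w)} ≤ ε) :
    prEvent (PMF.uniformOfFintype (ΩS × ΩI)) {p | C (I (S p.1, p.2)) ≠ f (S p.1)} ≤ ε + δ := by
  -- The distinguishing event: a (coins, sample) pair on which the label of the coins is wrong.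
  have h := hind {q | C q.1 ≠ f q.2}
  simp only [prEvent, PMF.toOuterMeasure_map_apply, Set.preimage_ofPred_eq] at h herr ⊢
  linarith [(abs_le.mp h).1]
end

section
/- Let Ω be a nonempty finite type, X a finite type, S : Ω → X, and let η ≥ 0. Suppose I assigns to each x in the range of S a PMF I(x) on Ω such that I(x) and the uniform PMF on S⁻¹(x) are statistically indistinguishable within η. Then the joint distribution of (I(S r), S r) — where r is uniform on Ω and, given S r = x, the first component is drawn from I(x) — and the joint distribution of (r, S r) with r uniform on Ω, are statistically indistinguishable within η (as distributions on Ω × X). -/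
open scoped ENNReal

/-!
Resampling a uniform `r` uniformly inside its own fibre `S⁻¹(S r)` leaves it uniform
(`uniform_bind_fibreUniform`). Hence the ideal joint law of `(r, S r)` is itself a mixture over
uniform `r`, with component at `r` the law of `(w, S r)` for `w` uniform on the fibre of `r`.
The inverter's joint law is the mixture with the same weights whose component at `r` draws `w` from
`I (S r)` instead. By hypothesis the components at `r` differ by at most `η` on the slice
`{w | (w, S r) ∈ T}` of every event `T`, and averaging over `r` preserves this bound
(`abs_prEvent_bind_sub_le`).
-/

theorem fibre_nonempty {Ω X : Type*} [Fintype Ω] [DecidableEq X] (S : Ω → X) (r : Ω) :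
    (Finset.univ.filter (fun w : Ω => S w = S r)).Nonempty :=
  ⟨r, by simp⟩

/-- The uniform distribution on the fibre of `S` through `r`. -/
noncomputable def fibreUniform {Ω X : Type*} [Fintype Ω] [DecidableEq X] (S : Ω → X) (r : Ω) :
    PMF Ω :=
  PMF.uniformOfFinset (Finset.univ.filter (fun w : Ω => S w = S r)) (fibre_nonempty S r)

theorem uniform_bind_fibreUniform {Ω X : Type*} [Fintype Ω] [Nonempty Ω] [DecidableEq X]
    (S : Ω → X) :
    (PMF.uniformOfFintype Ω).bind (fibreUniform S) = PMF.uniformOfFintype Ω := by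
  ext w
  rw [PMF.bind_apply, tsum_fintype]
  simp only [PMF.uniformOfFintype_apply]
  rw [← Finset.mul_sum]
  have key : ∑ r, fibreUniform S r w = 1 := by
    -- Only the `r` in the fibre of `w` contribute, each the inverse of the size of that fibre.
    have h : ∀ r, fibreUniform S r w = if S r = S w then
        ((Finset.univ.filter (fun v : Ω => S v = S w)).card : ℝ≥0∞)⁻¹ else 0 := by
      intro r
      by_cases hr : S r = S w
      · simp [fibreUniform, PMF.uniformOfFinset_apply, hr]
      · simp [fibreUniform, PMF.uniformOfFinset_apply, hr, Ne.symm hr]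
    simp only [h]
    rw [← Finset.sum_filter, Finset.sum_const, nsmul_eq_mul]
    refine ENNReal.mul_inv_cancel ?_ (ENNReal.natCast_ne_top _)
    rw [Nat.cast_ne_zero]
    exact Finset.card_ne_zero_of_mem (a := w) (by simp)
  rw [key, mul_one]

theorem toOuterMeasure_ne_top {α : Type*} (μ : PMF α) (s : Set α) : μ.toOuterMeasure s ≠ ⊤ := by
  rw [PMF.toOuterMeasure_apply]
  exact ne_top_of_le_ne_top μ.tsum_coe_ne_top
    (ENNReal.tsum_le_tsum fun a => Set.indicator_le_self' (fun _ _ => zero_le) a)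

theorem prEvent_bind {α β : Type*} [Fintype α] (p : PMF α) (f : α → PMF β) (T : Set β) :
    prEvent (p.bind f) T = ∑ a, (p a).toReal * prEvent (f a) T := by
  unfold prEvent
  rw [PMF.toOuterMeasure_bind_apply, tsum_fintype, ENNReal.toReal_sum]
  · simp only [ENNReal.toReal_mul]
  · exact fun a _ => ENNReal.mul_ne_top (p.apply_ne_top a) (toOuterMeasure_ne_top _ _)

theorem prEvent_map {α β : Type*} (p : PMF α) (f : α → β) (T : Set β) :
    prEvent (p.map f) T = prEvent p (f ⁻¹' T) := by
  simp only [prEvent, PMF.toOuterMeasure_map_apply]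

theorem abs_prEvent_bind_sub_le {α β γ : Type*} [Fintype α] (p : PMF α) (f : α → PMF β)
    (g : α → PMF γ) (T : Set β) (T' : Set γ) (η : ℝ)
    (h : ∀ a, |prEvent (f a) T - prEvent (g a) T'| ≤ η) :
    |prEvent (p.bind f) T - prEvent (p.bind g) T'| ≤ η := by
  rw [prEvent_bind, prEvent_bind, ← Finset.sum_sub_distrib]
  have hp : ∑ a, (p a).toReal = 1 := by
    rw [← ENNReal.toReal_sum fun a _ => p.apply_ne_top a, ← tsum_fintype (L := .unconditional α),
      p.tsum_coe, ENNReal.toReal_one]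
  calc |∑ a, ((p a).toReal * prEvent (f a) T - (p a).toReal * prEvent (g a) T')|
      ≤ ∑ a, |(p a).toReal * prEvent (f a) T - (p a).toReal * prEvent (g a) T'| :=
        Finset.abs_sum_le_sum_abs _ _
    _ ≤ ∑ a, (p a).toReal * η := by
        refine Finset.sum_le_sum fun a _ => ?_
        rw [← mul_sub, abs_mul, abs_of_nonneg ENNReal.toReal_nonneg]
        exact mul_le_mul_of_nonneg_left (h a) ENNReal.toReal_nonneg
    _ = η := by rw [← Finset.sum_mul, hp, one_mul]

/-- On the fibre through `r`, the pairs `(w, S w)` and `(w, S r)` coincide. -/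
theorem prEvent_fibreUniform_graph {Ω X : Type*} [Fintype Ω] [DecidableEq X]
    (S : Ω → X) (r : Ω) (T : Set (Ω × X)) :
    prEvent (fibreUniform S r) ((fun w => (w, S w)) ⁻¹' T)
      = prEvent (fibreUniform S r) ((fun w => (w, S r)) ⁻¹' T) := by
  classical
  unfold prEvent fibreUniform
  rw [PMF.toOuterMeasure_uniformOfFinset_apply, PMF.toOuterMeasure_uniformOfFinset_apply]
  congr 4
  refine Finset.filter_congr fun w hw => ?_
  simp only [Finset.mem_filter, Finset.mem_univ, true_and] at hw
  simp [hw]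

theorem stmt_12 {Ω X : Type*} [Fintype Ω] [Nonempty Ω] [Fintype X] [DecidableEq X]
    (S : Ω → X) (η : ℝ) (hη : 0 ≤ η) (I : X → PMF Ω)
    (hI : ∀ x : X, ∀ hx : ∃ w, S w = x,
      StatIndist (I x)
        (PMF.uniformOfFinset (Finset.univ.filter (fun w : Ω => S w = x))
          (by obtain ⟨w, hw⟩ := hx
              exact ⟨w, Finset.mem_filter.mpr ⟨Finset.mem_univ w, hw⟩⟩)) η) :
    StatIndist
      ((PMF.uniformOfFintype Ω).bind (fun r => (I (S r)).map (fun w => (w, S r))))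
      ((PMF.uniformOfFintype Ω).map (fun r => (r, S r))) η := by
  intro T
  rw [prEvent_map]
  nth_rewrite 2 [← uniform_bind_fibreUniform S]
  refine abs_prEvent_bind_sub_le _ _ _ _ _ _ fun r => ?_
  rw [prEvent_map, prEvent_fibreUniform_graph]
  exact hI (S r) ⟨r, rfl⟩ _
end
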